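/- arXiv:2502.17954 — 2 statements merged into one kernel-verified Lean document; each statement's English description precedes it below -/
import Mathlib

section
/- Let m, n ≥ 3 be integers and d = gcd(m, n). Then τ(V_m · V_n) = [m, n] · gcd(V_m, V_n) if (b is odd, a is even, and d is even) or (b is odd, a is odd, and 3 ∣ d) or (b is odd, a is even, d is odd, and ν_2(m) ≠ ν_2(n)); and τ(V_m · V_n) = 2·[m, n] · gcd(V_m, V_n) if (b is even) or (b is odd, a is odd, and 3 ∤ d) or (b is odd, a is even, d is odd, and ν_2(m) = ν_2(n)). -/
/-- The first Lucas sequence with parameters `(a, b)`: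
`U 0 = 0`, `U 1 = 1`, `U (k+2) = a * U (k+1) + b * U k`. -/
def U (a b : ℤ) : ℕ → ℤ
  | 0 => 0
  | 1 => 1
  | (k + 2) => a * U a b (k + 1) + b * U a b k

/-- The second Lucas sequence with parameters `(a, b)`:
`V 0 = 2`, `V 1 = a`, `V (k+2) = a * V (k+1) + b * V k`. -/
def V (a b : ℤ) : ℕ → ℤ
  | 0 => 2
  | 1 => a
  | (k + 2) => a * V a b (k + 1) + b * V a b k

/-- The order of appearance of `m` in the first Lucas sequence with parameters `(a, b)`:
the smallest positive integer `k` such that `m ∣ U a b k`. -/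
noncomputable def tau (a b : ℤ) (m : ℤ) : ℕ :=
  sInf {k : ℕ | 0 < k ∧ m ∣ U a b k}

/-- The pair `(a, b)` is nondegenerate: `b ≠ 0` and
`(a, b) ∉ {(±2, -1), (±1, -1), (0, ±1), (±1, 0)}`. -/
def Nondegenerate (a b : ℤ) : Prop :=
  b ≠ 0 ∧ (a, b) ∉ ({(2, -1), (-2, -1), (1, -1), (-1, -1),
    (0, 1), (0, -1), (1, 0), (-1, 0)} : Set (ℤ × ℤ))

/-- The addition formula in a form free of index subtraction. -/
lemma U_add (a b : ℤ) (j k : ℕ) :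
    U a b (j + k) = U a b j * U a b (k + 1) + U a b (j + 1) * U a b k - a * U a b j * U a b k ∧
    U a b (j + k + 1) = U a b (j + 1) * U a b (k + 1) + b * U a b j * U a b k := by
  induction k with
  | zero => simp [U]
  | succ k ih =>
    obtain ⟨h1, h2⟩ := ih
    have h3 : U a b (j + (k + 1) + 1) = a * U a b (j + k + 1) + b * U a b (j + k) := rfl
    have h4 : U a b (k + 1 + 1) = a * U a b (k + 1) + b * U a b k := rfl
    refine ⟨?_, ?_⟩
    · rw [← add_assoc, h2, h4]; ring
    · rw [h3, h4, h1, h2]; ring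

lemma V_eq (a b : ℤ) (k : ℕ) : V a b k = 2 * U a b (k + 1) - a * U a b k := by
  induction k using Nat.twoStepInduction with
  | zero => simp [U, V]
  | one => simp [U, V]; ring
  | more k h1 h2 =>
    have h3 : V a b (k + 2) = a * V a b (k + 1) + b * V a b k := rfl
    have h4 : U a b (k + 2 + 1) = a * U a b (k + 2) + b * U a b (k + 1) := rfl
    have h5 : U a b (k + 2) = a * U a b (k + 1) + b * U a b k := rfl
    have h6 : U a b (k + 1 + 1) = U a b (k + 2) := rfl
    rw [h3, h1, h2, h4, h6, h5]; ring

lemma U_two_mul (a b : ℤ) (k : ℕ) : U a b (2 * k) = V a b k * U a b k := by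
  rw [two_mul, (U_add a b k k).1, V_eq]; ring

lemma isCoprime_U_succ_right {a b : ℤ} (hab : IsCoprime a b) (k : ℕ) :
    IsCoprime (U a b (k + 1)) b := by
  induction k with
  | zero => exact isCoprime_one_left
  | succ k ih =>
    change IsCoprime (a * U a b (k + 1) + b * U a b k) b
    exact (hab.mul_left ih).add_mul_left_left _

lemma isCoprime_U_succ {a b : ℤ} (hab : IsCoprime a b) (k : ℕ) :
    IsCoprime (U a b k) (U a b (k + 1)) := by
  induction k with
  | zero => exact isCoprime_one_right
  | succ k ih =>
    change IsCoprime _ (a * U a b (k + 1) + b * U a b k)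
    have h : IsCoprime (U a b (k + 1)) (b * U a b k) :=
      (isCoprime_U_succ_right hab k).mul_right ih.symm
    rw [add_comm (a * _)]
    exact h.add_mul_right_right a

/-- `U k` divides `U (k * t)`, and the quotient is `t` times a unit modulo `U k`. -/
lemma exists_quotient {a b : ℤ} (hab : IsCoprime a b) (k t : ℕ) :
    ∃ S : ℤ, U a b (k * t) = U a b k * S ∧
      ∀ q, q ∣ U a b k → ∀ z, (q ∣ z * S ↔ q ∣ z * t) := by
  have key : ∃ S : ℤ, U a b (k * t) = U a b k * S ∧
      U a b k ∣ U a b (k + 1) * S - t * U a b (k + 1) ^ t ∧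
      U a b k ∣ U a b (k * t + 1) - U a b (k + 1) ^ t := by
    induction t with
    | zero => exact ⟨0, by simp [U], by simp, by simp [U]⟩
    | succ t ih =>
      obtain ⟨S, h1, ⟨y, hy⟩, ⟨z, hz⟩⟩ := ih
      obtain ⟨e1, e2⟩ := U_add a b (k * t) k
      have hS : U a b (k * (t + 1)) =
          U a b k * (S * U a b (k + 1) + U a b (k * t + 1) - a * U a b (k * t)) := by
        rw [mul_add_one, e1, h1]; ring
      refine ⟨_, hS, ?_, ?_⟩
      · refine ⟨U a b (k + 1) * y + U a b (k + 1) * z - U a b (k + 1) * a * S, ?_⟩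
        rw [h1]; push_cast
        linear_combination U a b (k + 1) * hy + U a b (k + 1) * hz
      · refine ⟨U a b (k + 1) * z + b * U a b (k * t), ?_⟩
        rw [mul_add_one, e2]
        linear_combination U a b (k + 1) * hz
  obtain ⟨S, h1, h2, -⟩ := key
  refine ⟨S, h1, fun q hq z => ?_⟩
  have hc : IsCoprime q (U a b (k + 1)) := (isCoprime_U_succ hab k).of_isCoprime_of_dvd_left hq
  have h3 : q ∣ z * (U a b (k + 1) * S - t * U a b (k + 1) ^ t) :=
    (hq.trans h2).mul_left z
  constructor
  · intro h
    refine (hc.pow_right (n := t)).dvd_of_dvd_mul_left ?_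
    have := dvd_sub (h.mul_left (U a b (k + 1))) h3
    convert this using 1; ring
  · intro h
    refine hc.dvd_of_dvd_mul_left ?_
    have := dvd_add (h.mul_left (U a b (k + 1) ^ t)) h3
    convert this using 1; ring

lemma dvd_U_gcd {a b : ℤ} (hab : IsCoprime a b) (q : ℤ) (i j : ℕ) :
    q ∣ U a b i → q ∣ U a b j → q ∣ U a b (Nat.gcd i j) := by
  induction i, j using Nat.gcd.induction with
  | H0 j => intro _ h; simpa using h
  | H1 i j hi ih =>
    intro h1 h2
    rw [Nat.gcd_rec]
    refine ih ?_ h1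
    obtain ⟨S, hS, -⟩ := exists_quotient hab i (j / i)
    have h3 : q ∣ U a b (i * (j / i)) := hS ▸ h1.mul_right S
    have h4 := (U_add a b (i * (j / i)) (j % i)).1
    rw [Nat.div_add_mod] at h4
    have hc : IsCoprime q (U a b (i * (j / i) + 1)) :=
      (isCoprime_U_succ hab _).of_isCoprime_of_dvd_left h3
    refine hc.dvd_of_dvd_mul_left ?_
    have h5 : q ∣ U a b (i * (j / i)) * (U a b (j % i + 1) - a * U a b (j % i)) :=
      h3.mul_right _
    have h6 := dvd_sub h2 h5
    rw [h4] at h6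
    convert h6 using 1; ring

lemma U_pos_le_succ {a b : ℤ} (ha : 0 < a) (hΔ : 0 < a ^ 2 + 4 * b) (hb : b ≠ 0) (k : ℕ) :
    0 < U a b (k + 1) ∧ U a b k ≤ U a b (k + 1) ∧ (2 ≤ k → U a b k < V a b k) := by
  rcases lt_or_gt_of_ne hb with hb | hb
  · have h3 : 3 ≤ a := by nlinarith
    have key : 0 ≤ U a b k ∧ 0 < U a b (k + 1) ∧ (a + 1) * U a b k < 2 * U a b (k + 1) := by
      induction k with
      | zero => simp [U]
      | succ k ih =>
        obtain ⟨i1, i2, i3⟩ := ih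
        have h4 : U a b (k + 1 + 1) = a * U a b (k + 1) + b * U a b k := rfl
        have h5 : (a + 1) * U a b (k + 1) < 2 * U a b (k + 1 + 1) := by
          rw [h4]
          have : (a - 1) * ((a + 1) * U a b k) < (a - 1) * (2 * U a b (k + 1)) :=
            mul_lt_mul_of_pos_left i3 (by linarith)
          have : 0 ≤ (a ^ 2 + 4 * b - 1) * U a b k := mul_nonneg (by linarith) i1
          nlinarith
        refine ⟨i2.le, ?_, h5⟩
        nlinarith
    obtain ⟨i1, i2, i3⟩ := key
    refine ⟨i2, by nlinarith, fun _ => ?_⟩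
    rw [V_eq]; linarith
  · have pos : ∀ k, 0 ≤ U a b k ∧ 0 < U a b (k + 1) := by
      intro k
      induction k with
      | zero => simp [U]
      | succ k ih =>
        have h4 : U a b (k + 1 + 1) = a * U a b (k + 1) + b * U a b k := rfl
        refine ⟨ih.2.le, ?_⟩
        rw [h4]
        have := mul_pos ha ih.2
        have := mul_nonneg hb.le ih.1
        linarith
    refine ⟨(pos k).2, ?_, fun hk => ?_⟩
    · cases k with
      | zero => simp [U]
      | succ k =>
        have h4 : U a b (k + 1 + 1) = a * U a b (k + 1) + b * U a b k := rfl
        rw [h4]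
        have := mul_nonneg hb.le (pos k).1
        nlinarith [(pos k).2]
    · obtain ⟨j, rfl⟩ := Nat.exists_eq_add_of_le' hk
      have h4 : U a b (j + 2 + 1) = a * U a b (j + 2) + b * U a b (j + 1) := rfl
      rw [V_eq, h4]
      have := mul_pos hb (pos j).2
      nlinarith [(pos (j + 1)).2]

lemma V_dvd_U_iff {a b : ℤ} (hab : IsCoprime a b) (ha : 0 < a) (hΔ : 0 < a ^ 2 + 4 * b)
    (hb : b ≠ 0) {m : ℕ} (hm : 2 ≤ m) (k : ℕ) : V a b m ∣ U a b k ↔ 2 * m ∣ k := by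
  constructor
  · intro h
    have h2 : V a b m ∣ U a b (2 * m) := ⟨_, U_two_mul a b m⟩
    have h3 := dvd_U_gcd hab _ _ _ h2 h
    obtain ⟨r, hr⟩ := Nat.gcd_dvd_left (2 * m) k
    have hg : 0 < Nat.gcd (2 * m) k := Nat.gcd_pos_of_pos_left _ (by omega)
    by_cases h1 : r = 1
    · subst h1
      rw [mul_one] at hr
      rw [hr]; exact Nat.gcd_dvd_right _ _
    · exfalso
      have hr0 : r ≠ 0 := by rintro rfl; omega
      have hle : Nat.gcd (2 * m) k ≤ m := by
        have : Nat.gcd (2 * m) k * 2 ≤ Nat.gcd (2 * m) k * r :=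
          Nat.mul_le_mul_left _ (by omega)
        omega
      have mono : Monotone (U a b) :=
        monotone_nat_of_le_succ fun i => (U_pos_le_succ ha hΔ hb i).2.1
      obtain ⟨j, hj⟩ := Nat.exists_eq_add_of_le' hg
      have hpos : 0 < U a b (Nat.gcd (2 * m) k) := by
        rw [hj]; exact (U_pos_le_succ ha hΔ hb j).1
      have := Int.le_of_dvd hpos h3
      have := mono hle
      have := (U_pos_le_succ ha hΔ hb m).2.2 hm
      linarith
  · rintro ⟨t, rfl⟩
    obtain ⟨S, hS, -⟩ := exists_quotient hab (2 * m) t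
    rw [hS, U_two_mul, mul_assoc]
    exact dvd_mul_right _ _

/-- With `U (2 * [m, n]) = lcm (V m) (V n) * c`, this determines which common divisors of
`V m` and `V n` divide `c`. -/
lemma dvd_cofactor_iff {a b : ℤ} (hab : IsCoprime a b) {m n x y : ℕ} (hxy : m * x = n * y)
    (hVm : V a b m ≠ 0) (hVn : V a b n ≠ 0) {c : ℤ}
    (hc : U a b (2 * (m * x)) = Int.lcm (V a b m) (V a b n) * c)
    {q : ℤ} (hqm : q ∣ V a b m) (hqn : q ∣ V a b n) :
    q ∣ c ↔ q ∣ U a b m * x ∧ q ∣ U a b n * y := by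
  have aux : ∀ (i z : ℕ), V a b i ≠ 0 → q ∣ V a b i →
      (q * V a b i ∣ U a b (2 * (i * z)) ↔ q ∣ U a b i * z) := by
    intro i z h0 hq
    obtain ⟨S, hS, h⟩ := exists_quotient hab (2 * i) z
    rw [U_two_mul] at hS h
    rw [← mul_assoc 2 i z, hS, mul_assoc, mul_comm q, mul_dvd_mul_iff_left h0,
      h q (hq.mul_right _)]
  rw [← aux m x hVm hqm, ← aux n y hVn hqn, ← hxy, hc]
  have hl0 : (Int.lcm (V a b m) (V a b n) : ℤ) ≠ 0 := by
    exact_mod_cast Int.lcm_ne_zero hVm hVn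
  constructor
  · intro h
    rw [mul_comm q, mul_comm q]
    exact ⟨mul_dvd_mul (Int.dvd_lcm_left _ _) h, mul_dvd_mul (Int.dvd_lcm_right _ _) h⟩
  · rintro ⟨h1, h2⟩
    have h3 := Int.coe_lcm_dvd h1 h2
    rw [Int.lcm_mul_left, Nat.cast_mul, mul_comm, mul_dvd_mul_iff_left hl0] at h3
    exact (Int.dvd_natAbs_self).trans h3

lemma tau_eq_of_forall_iff {a b M : ℤ} {T : ℕ} (hT : 0 < T)
    (h : ∀ k, M ∣ U a b k ↔ T ∣ k) : tau a b M = T := by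
  refine le_antisymm (Nat.sInf_le ⟨hT, (h T).2 dvd_rfl⟩) ?_
  exact le_csInf ⟨T, hT, (h T).2 dvd_rfl⟩ fun k hk => Nat.le_of_dvd hk.1 ((h k).1 hk.2)

/-- The value of `τ (V m * V n)`, in terms of a parity condition. -/
lemma tau_V_mul_V_aux {a b : ℤ} (hab : IsCoprime a b) (ha : 0 < a) (hΔ : 0 < a ^ 2 + 4 * b)
    (hb : b ≠ 0) {m n x y : ℕ} (hm : 2 ≤ m) (hn : 2 ≤ n)
    (hx : m * x = Nat.lcm m n) (hy : n * y = Nat.lcm m n) :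
    ((2 ∣ V a b m ∧ 2 ∣ V a b n ∧ 2 ∣ U a b m * x ∧ 2 ∣ U a b n * y) →
      tau a b (V a b m * V a b n) = Nat.lcm m n * Int.gcd (V a b m) (V a b n)) ∧
    (¬ (2 ∣ V a b m ∧ 2 ∣ V a b n ∧ 2 ∣ U a b m * x ∧ 2 ∣ U a b n * y) →
      tau a b (V a b m * V a b n) = 2 * Nat.lcm m n * Int.gcd (V a b m) (V a b n)) := by
  have hVpos : ∀ i, 2 ≤ i → 0 < V a b i := by
    intro i hi
    obtain ⟨j, rfl⟩ := Nat.exists_eq_add_of_le' hi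
    exact (U_pos_le_succ ha hΔ hb (j + 1)).1.trans ((U_pos_le_succ ha hΔ hb _).2.2 hi)
  have hVm := hVpos m hm
  have hVn := hVpos n hn
  have hL : 0 < Nat.lcm m n := Nat.lcm_pos (by omega) (by omega)
  have hcop : IsCoprime (x : ℤ) y := by
    rw [Nat.isCoprime_iff_coprime]
    have hd : 0 < Nat.gcd m n := Nat.gcd_pos_of_pos_left _ (by omega)
    have e1 := Nat.gcd_mul_lcm m n
    have e2 : n = Nat.gcd m n * x := by
      apply Nat.eq_of_mul_eq_mul_left (show 0 < m by omega)
      rw [← e1, ← hx]; ring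
    have e3 : m = Nat.gcd m n * y := by
      apply Nat.eq_of_mul_eq_mul_left (show 0 < n by omega)
      rw [mul_comm n m, ← e1, ← hy]; ring
    have e4 : Nat.gcd n m = Nat.gcd m n * Nat.gcd x y := by
      rw [← Nat.gcd_mul_left, ← e2, ← e3]
    rw [Nat.gcd_comm n m] at e4
    exact Nat.eq_of_mul_eq_mul_left hd (by rw [← e4, mul_one])
  have hdm : V a b m ∣ U a b (2 * Nat.lcm m n) :=
    (V_dvd_U_iff hab ha hΔ hb hm _).2 (Nat.mul_dvd_mul_left 2 (Nat.dvd_lcm_left _ _))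
  have hdn : V a b n ∣ U a b (2 * Nat.lcm m n) :=
    (V_dvd_U_iff hab ha hΔ hb hn _).2 (Nat.mul_dvd_mul_left 2 (Nat.dvd_lcm_right _ _))
  obtain ⟨c, hc⟩ := Int.coe_lcm_dvd hdm hdn
  have hcof : ∀ q : ℤ, q ∣ V a b m → q ∣ V a b n →
      (q ∣ c ↔ q ∣ U a b m * x ∧ q ∣ U a b n * y) := fun q h1 h2 =>
    dvd_cofactor_iff hab (hx.trans hy.symm) hVm.ne' hVn.ne' (by rw [hx]; exact hc) h1 h2
  have hl0 : (Int.lcm (V a b m) (V a b n) : ℤ) ≠ 0 := by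
    exact_mod_cast Int.lcm_ne_zero hVm.ne' hVn.ne'
  have hgl : V a b m * V a b n =
      Int.lcm (V a b m) (V a b n) * Int.gcd (V a b m) (V a b n) := by
    have h := Int.gcd_mul_lcm (V a b m) (V a b n)
    have h2 : ((V a b m * V a b n).natAbs : ℤ) = V a b m * V a b n :=
      Int.natAbs_of_nonneg (mul_pos hVm hVn).le
    rw [← h2, Int.natAbs_mul, ← h]; push_cast; ring
  have hgm := Int.gcd_dvd_left (V a b m) (V a b n)
  have hgn := Int.gcd_dvd_right (V a b m) (V a b n)
  have hg : 0 < Int.gcd (V a b m) (V a b n) := Int.gcd_pos_of_ne_zero_left _ hVm.ne'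
  have hguni : ∀ q : ℤ, q ∣ V a b m → q ∣ V a b n → q ∣ Int.gcd (V a b m) (V a b n) :=
    fun _ h1 h2 => Int.dvd_coe_gcd h1 h2
  generalize Int.gcd (V a b m) (V a b n) = g at *
  have hmain : ∀ k, V a b m * V a b n ∣ U a b k ↔
      ∃ t, k = 2 * Nat.lcm m n * t ∧ (g : ℤ) ∣ c * t := by
    have hmul : ∀ t, V a b m * V a b n ∣ U a b (2 * Nat.lcm m n * t) ↔ (g : ℤ) ∣ c * t := by
      intro t
      obtain ⟨S, hS, h⟩ := exists_quotient hab (2 * Nat.lcm m n) t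
      rw [hgl, hS, hc, mul_assoc, mul_dvd_mul_iff_left hl0, h _ (hgm.trans hdm)]
    intro k
    constructor
    · intro h
      have h1 := (V_dvd_U_iff hab ha hΔ hb hm k).1 ((dvd_mul_right _ _).trans h)
      have h2 := (V_dvd_U_iff hab ha hΔ hb hn k).1 ((dvd_mul_left _ _).trans h)
      have h3 := Nat.lcm_dvd h1 h2
      rw [Nat.lcm_mul_left] at h3
      obtain ⟨t, rfl⟩ := h3
      exact ⟨t, rfl, (hmul t).1 h⟩
    · rintro ⟨t, rfl, h⟩
      exact (hmul t).2 h
  have hdvd2 : ∀ r : ℤ, r ∣ c → r ∣ g → r ∣ 2 := by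
    intro r hrc hrg
    obtain ⟨h1, h2⟩ := (hcof r (hrg.trans hgm) (hrg.trans hgn)).1 hrc
    have aux : ∀ (i z : ℕ), r ∣ V a b i → r ∣ U a b i * z → r ∣ 2 * z := by
      intro i z h3 h4
      obtain ⟨u, w, huw⟩ := isCoprime_U_succ hab i
      have h5 : (2 * z : ℤ) = 2 * u * (U a b i * z) + w * (z * V a b i) +
          w * a * (U a b i * z) := by
        rw [V_eq]; linear_combination -2 * (z : ℤ) * huw
      rw [h5]
      exact dvd_add (dvd_add (h4.mul_left _) ((h3.mul_left _).mul_left _)) (h4.mul_left _)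
    have h3 := aux m x (hrg.trans hgm) h1
    have h4 := aux n y (hrg.trans hgn) h2
    obtain ⟨u, w, huw⟩ := hcop
    have h5 : (2 : ℤ) = u * (2 * x) + w * (2 * y) := by linear_combination -2 * huw
    rw [h5]
    exact dvd_add (h3.mul_left _) (h4.mul_left _)
  have hgcd : ((Int.gcd g c : ℕ) : ℤ) ∣ 2 :=
    hdvd2 _ (Int.gcd_dvd_right _ _) (Int.gcd_dvd_left _ _)
  have hgcd' : Int.gcd g c ∣ 2 := by exact_mod_cast hgcd
  have hred : ∀ t : ℕ, (g : ℤ) ∣ c * t ↔ g ∣ Int.gcd g c * t := by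
    intro t
    rw [← Int.natAbs_dvd_natAbs, Int.natAbs_mul, Int.natAbs_natCast, Int.natAbs_natCast,
      Int.gcd, Int.natAbs_natCast, Nat.dvd_gcd_mul_iff_dvd_mul]
  have htau : ∀ e g', 0 < e → Int.gcd g c = e → g = e * g' →
      tau a b (V a b m * V a b n) = 2 * Nat.lcm m n * g' := by
    rintro e g' he hgc rfl
    have hg' : 0 < g' := Nat.pos_of_mul_pos_left hg
    refine tau_eq_of_forall_iff (by positivity) fun k => ?_
    rw [hmain]
    simp only [hred, hgc, Nat.mul_dvd_mul_iff_left he]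
    constructor
    · rintro ⟨t, rfl, h⟩
      exact Nat.mul_dvd_mul_left _ h
    · rintro ⟨t, rfl⟩
      exact ⟨g' * t, by ring, dvd_mul_right _ _⟩
  constructor
  · rintro ⟨p1, p2, p3, p4⟩
    have h2c : (2 : ℤ) ∣ c := (hcof 2 p1 p2).2 ⟨p3, p4⟩
    have h2g := hguni 2 p1 p2
    have h2 : 2 ∣ Int.gcd g c := by exact_mod_cast Int.dvd_coe_gcd h2g h2c
    obtain ⟨g', hg'⟩ : 2 ∣ g := by exact_mod_cast h2g
    rw [htau 2 g' two_pos (Nat.dvd_antisymm hgcd' h2) hg', hg']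
    ring
  · intro hp
    refine htau 1 g one_pos ?_ (one_mul g).symm
    refine ((Nat.dvd_prime Nat.prime_two).1 hgcd').resolve_right fun h => hp ?_
    have h2g : (2 : ℤ) ∣ g := by
      have := Int.gcd_dvd_left (g : ℤ) c
      rwa [h] at this
    have h2c : (2 : ℤ) ∣ c := by
      have := Int.gcd_dvd_right (g : ℤ) c
      rwa [h] at this
    exact ⟨h2g.trans hgm, h2g.trans hgn, (hcof 2 (h2g.trans hgm) (h2g.trans hgn)).1 h2c⟩

lemma two_dvd_U_iff_of_even {a b : ℤ} (ha : Even a) (hb : Odd b) (k : ℕ) :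
    2 ∣ U a b k ↔ 2 ∣ k := by
  induction k using Nat.twoStepInduction with
  | zero => simp [U]
  | one => simp [U]
  | more k h1 h2 =>
    have h3 : U a b (k + 2) = a * U a b (k + 1) + b * U a b k := rfl
    rw [← even_iff_two_dvd, ← even_iff_two_dvd] at *
    have := Int.not_even_iff_odd.2 hb
    rw [h3]
    simp only [Int.even_add, Int.even_mul, Nat.even_add, ha, this]
    simp [h1]

lemma two_dvd_U_iff_of_odd {a b : ℤ} (ha : Odd a) (hb : Odd b) (k : ℕ) :
    2 ∣ U a b k ↔ 3 ∣ k := by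
  have h3 : ∀ k, U a b (k + 2) = a * U a b (k + 1) + b * U a b k := fun _ => rfl
  have key : ∀ j, 2 ∣ U a b (3 * j) ∧ ¬ 2 ∣ U a b (3 * j + 1) ∧ ¬ 2 ∣ U a b (3 * j + 2) := by
    have ha' := Int.not_even_iff_odd.2 ha
    have hb' := Int.not_even_iff_odd.2 hb
    simp only [← even_iff_two_dvd]
    intro j
    induction j with
    | zero => simp [U, ha']
    | succ j ih =>
      have e1 : Even (U a b (3 * j + 3)) := by
        rw [h3 (3 * j + 1)]; simp [Int.even_add, Int.even_mul, ha', hb', ih]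
      have e2 : ¬ Even (U a b (3 * j + 4)) := by
        rw [h3 (3 * j + 2)]; simp [Int.even_add, Int.even_mul, hb', ih, e1]
      have e3 : ¬ Even (U a b (3 * j + 5)) := by
        rw [h3 (3 * j + 3)]; simp [Int.even_add, Int.even_mul, ha', e2, e1]
      exact ⟨e1, e2, e3⟩
  obtain ⟨h0, h1, h2⟩ := key (k / 3)
  have hk := Nat.div_add_mod k 3
  have : k % 3 < 3 := Nat.mod_lt _ (by norm_num)
  rw [Nat.dvd_iff_mod_eq_zero]
  interval_cases hr : k % 3
  · rw [add_zero] at hk; rw [hk] at h0; simpa using h0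
  · rw [hk] at h1; simpa using h1
  · rw [hk] at h2; simpa using h2

lemma two_dvd_V_iff (a b : ℤ) (k : ℕ) : 2 ∣ V a b k ↔ 2 ∣ a ∨ 2 ∣ U a b k := by
  rw [V_eq, dvd_sub_right (dvd_mul_right _ _), Int.prime_two.dvd_mul]

theorem tau_V_mul_V (a b : ℤ) (hab : IsCoprime a b) (ha : 0 < a)
    (hΔ : 0 < a ^ 2 + 4 * b) (hnd : Nondegenerate a b)
    (m n : ℕ) (hm : 3 ≤ m) (hn : 3 ≤ n) :
    ((Odd b ∧ Even a ∧ Even (Nat.gcd m n)) ∨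
     (Odd b ∧ Odd a ∧ 3 ∣ Nat.gcd m n) ∨
     (Odd b ∧ Even a ∧ Odd (Nat.gcd m n) ∧ padicValNat 2 m ≠ padicValNat 2 n) →
      tau a b (V a b m * V a b n) = Nat.lcm m n * Int.gcd (V a b m) (V a b n)) ∧
    (Even b ∨
     (Odd b ∧ Odd a ∧ ¬ (3 ∣ Nat.gcd m n)) ∨
     (Odd b ∧ Even a ∧ Odd (Nat.gcd m n) ∧ padicValNat 2 m = padicValNat 2 n) →
      tau a b (V a b m * V a b n) = 2 * Nat.lcm m n * Int.gcd (V a b m) (V a b n)) := by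
  obtain ⟨x, hx⟩ := Nat.dvd_lcm_left m n
  obtain ⟨y, hy⟩ := Nat.dvd_lcm_right m n
  have hcast : ∀ z : ℕ, (2 : ℤ) ∣ z ↔ 2 ∣ z := fun z => by norm_cast
  have haux := tau_V_mul_V_aux hab ha hΔ hnd.1 (by omega : 2 ≤ m) (by omega : 2 ≤ n)
    hx.symm hy.symm
  simp only [two_dvd_V_iff, Int.prime_two.dvd_mul, hcast] at haux
  obtain ⟨h1, h2⟩ := haux
  have hpm : 2 ∣ m ↔ padicValNat 2 m ≠ 0 := dvd_iff_padicValNat_ne_zero (by omega)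
  have hpn : 2 ∣ n ↔ padicValNat 2 n ≠ 0 := dvd_iff_padicValNat_ne_zero (by omega)
  have hlcm : 2 ∣ Nat.lcm m n ↔ 2 ∣ m ∨ 2 ∣ n := by
    rw [← Nat.prime_two.dvd_mul]
    exact ⟨fun h => h.trans (Nat.lcm_dvd_mul m n), fun h =>
      ((Nat.prime_two.dvd_mul).1 h).elim (fun h => h.trans (Nat.dvd_lcm_left m n))
        (fun h => h.trans (Nat.dvd_lcm_right m n))⟩
  have hxl : 2 ∣ Nat.lcm m n ↔ 2 ∣ m ∨ 2 ∣ x := by rw [hx, Nat.prime_two.dvd_mul]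
  have hyl : 2 ∣ Nat.lcm m n ↔ 2 ∣ n ∨ 2 ∣ y := by
    conv_lhs => rw [hy]
    rw [Nat.prime_two.dvd_mul]
  constructor
  · intro h
    apply h1
    rcases h with ⟨hb, he, hd⟩ | ⟨hb, ho, hd⟩ | ⟨hb, he, hd, hne⟩
    · rw [even_iff_two_dvd, Nat.dvd_gcd_iff] at hd
      simp only [two_dvd_U_iff_of_even he hb]
      exact ⟨.inr hd.1, .inr hd.2, .inl hd.1, .inl hd.2⟩
    · rw [Nat.dvd_gcd_iff] at hd
      simp only [two_dvd_U_iff_of_odd ho hb]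
      exact ⟨.inr hd.1, .inr hd.2, .inl hd.1, .inl hd.2⟩
    · have ha2 := even_iff_two_dvd.1 he
      have hor : 2 ∣ m ∨ 2 ∣ n := by
        rw [hpm, hpn]
        by_contra! hc
        exact hne (hc.1.trans hc.2.symm)
      simp only [two_dvd_U_iff_of_even he hb]
      exact ⟨.inl ha2, .inl ha2, hxl.1 (hlcm.2 hor), hyl.1 (hlcm.2 hor)⟩
  · intro h
    apply h2
    rcases h with hb | ⟨hb, ho, hd⟩ | ⟨hb, he, hd, heq⟩
    · have hb2 := even_iff_two_dvd.1 hb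
      have ha2 : ¬ 2 ∣ a := fun h => by
        exact Int.prime_two.not_isUnit (hab.isUnit_of_dvd' h hb2)
      have hU : ¬ 2 ∣ U a b m := fun h => by
        obtain ⟨j, rfl⟩ := Nat.exists_eq_add_of_le' (show 1 ≤ m by omega)
        exact Int.prime_two.not_isUnit ((isCoprime_U_succ_right hab j).isUnit_of_dvd' h hb2)
      exact fun hp => hp.1.elim ha2 hU
    · have ha2 : ¬ 2 ∣ a := by rwa [← even_iff_two_dvd, Int.not_even_iff_odd]
      rw [Nat.dvd_gcd_iff] at hd
      simp only [two_dvd_U_iff_of_odd ho hb]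
      exact fun hp => hd ⟨hp.1.resolve_left ha2, hp.2.1.resolve_left ha2⟩
    · rw [← Nat.not_even_iff_odd, even_iff_two_dvd, Nat.dvd_gcd_iff] at hd
      rw [← heq, ← hpm] at hpn
      simp only [two_dvd_U_iff_of_even he hb]
      intro hp
      have hm2 : 2 ∣ m := (hlcm.1 (hxl.2 hp.2.2.1)).elim id hpn.1
      exact hd ⟨hm2, hpn.2 hm2⟩
end

section
/- Let n be a positive integer and p ≥ 3 a prime number. Then z(F_n · F_{n+p} · F_{n+2p}) equals: n(n+p)(n+2p) if p ∤ n and n is odd; n(n+p)(n+2p)/2 if p ∤ n and n is even; (n(n+p)(n+2p)/p²)·F_p² if p ∣ n and n is odd; and (n(n+p)(n+2p)/(2p²))·(F_p²·L_p / gcd(L_p, (n+p)/p)) if p ∣ n and n is even. -/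
/-- The classical Lucas sequence: `L 0 = 2`, `L 1 = 1`, `L (k+2) = L (k+1) + L k`. -/
def lucas : ℕ → ℕ
  | 0 => 2
  | 1 => 1
  | (k + 2) => lucas (k + 1) + lucas k

/-- The order of appearance of `m` in the Fibonacci sequence:
the smallest positive integer `k` such that `m ∣ fib k`. -/
noncomputable def z (m : ℕ) : ℕ :=
  sInf {k : ℕ | 0 < k ∧ m ∣ Nat.fib k}

lemma z_eq_of_dvd_fib_iff {N C : ℕ} (hC : 0 < C) (h : ∀ k, 0 < k → (N ∣ Nat.fib k ↔ C ∣ k)) :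
    z N = C := by
  refine le_antisymm (Nat.sInf_le ⟨hC, (h C hC).2 dvd_rfl⟩) ?_
  refine le_csInf ⟨C, hC, (h C hC).2 dvd_rfl⟩ ?_
  rintro k ⟨hk, hN⟩
  exact Nat.le_of_dvd hk ((h k hk).1 hN)

lemma lucas_succ (n : ℕ) : lucas (n + 1) = Nat.fib n + Nat.fib (n + 2) := by
  induction n using Nat.twoStepInduction with
  | zero => simp [lucas]
  | one => simp [lucas, Nat.fib_add_two]
  | more n h1 h2 =>
    rw [lucas, h1, h2, Nat.fib_add_two (n := n + 2), Nat.fib_add_two (n := n)]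
    ring

lemma fib_two_mul_eq_mul_lucas (n : ℕ) : Nat.fib (2 * n) = Nat.fib n * lucas n := by
  cases n with
  | zero => simp
  | succ n =>
    rw [lucas_succ, show 2 * (n + 1) = n + (n + 1) + 1 by ring, Nat.fib_add]
    ring

lemma fib_dvd_fib_iff {d k : ℕ} (hd : d ≠ 2) : Nat.fib d ∣ Nat.fib k ↔ d ∣ k := by
  refine ⟨fun h => ?_, Nat.fib_dvd d k⟩
  have h1 : Nat.fib (Nat.gcd d k) = Nat.fib d := by
    rw [Nat.fib_gcd, Nat.gcd_eq_left h]
  rcases Nat.eq_zero_or_pos d with rfl | hd0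
  · simpa using h
  have hle : Nat.gcd d k ≤ d := Nat.le_of_dvd hd0 (Nat.gcd_dvd_left d k)
  rcases hle.lt_or_eq with hlt | heq
  · exfalso
    have hpos : 0 < Nat.gcd d k := Nat.gcd_pos_of_pos_left k hd0
    have h3 : 3 ≤ d := by omega
    rcases Nat.lt_or_ge (Nat.gcd d k) 2 with h2 | h2
    · have h4 : Nat.gcd d k = 1 := by omega
      rw [h4] at h1
      have := (Nat.fib_lt_fib (m := 2) le_rfl (n := d)).2 (by omega)
      simp at this h1
      omega
    · exact absurd h1 ((Nat.fib_lt_fib h2).2 hlt).ne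
  · exact heq ▸ Nat.gcd_dvd_right d k

lemma fib_coprime_of_gcd {a b : ℕ} (h : Nat.gcd a b ∣ 2) :
    Nat.Coprime (Nat.fib a) (Nat.fib b) := by
  rw [Nat.coprime_iff_gcd_eq_one, ← Nat.fib_gcd]
  rcases (Nat.dvd_prime Nat.prime_two).1 h with h | h <;> simp [h]

/-- Modulo `fib d ^ 3`, the number `fib (d * j)` is the difference of the `j`-th powers of the
neighbours of `fib d`. -/
lemma fib_succ_pow_three_dvd (d j : ℕ) :
    (Nat.fib (d + 1) : ℤ) ^ 3 ∣ Nat.fib ((d + 1) * j) -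
      ((Nat.fib (d + 2) : ℤ) ^ j - (Nat.fib d : ℤ) ^ j) ∧
    (Nat.fib (d + 1) : ℤ) ^ 2 ∣ Nat.fib ((d + 1) * j + 1) - (Nat.fib (d + 2) : ℤ) ^ j := by
  induction j with
  | zero => simp
  | succ j ih =>
    obtain ⟨⟨s, hs⟩, ⟨t, ht⟩⟩ := ih
    obtain ⟨r, hr⟩ : (Nat.fib (d + 1) : ℤ) ∣ Nat.fib ((d + 1) * j) :=
      Int.natCast_dvd_natCast.2 (Nat.fib_dvd _ _ (dvd_mul_right _ _))
    have h1 : (Nat.fib ((d + 1) * (j + 1)) : ℤ) =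
        Nat.fib ((d + 1) * j) * Nat.fib d + Nat.fib ((d + 1) * j + 1) * Nat.fib (d + 1) := by
      rw [show (d + 1) * (j + 1) = (d + 1) * j + d + 1 by ring, Nat.fib_add]
      push_cast; ring
    have h2 : (Nat.fib ((d + 1) * (j + 1) + 1) : ℤ) =
        Nat.fib ((d + 1) * j) * Nat.fib (d + 1) +
          Nat.fib ((d + 1) * j + 1) * Nat.fib (d + 2) := by
      rw [show (d + 1) * (j + 1) + 1 = (d + 1) * j + (d + 1) + 1 by ring, Nat.fib_add]
      push_cast; ring
    have h3 : (Nat.fib (d + 2) : ℤ) = Nat.fib d + Nat.fib (d + 1) := by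
      rw [Nat.fib_add_two]; push_cast; ring
    constructor
    · refine ⟨s * Nat.fib d + t, ?_⟩
      rw [h1]
      linear_combination (Nat.fib d : ℤ) * hs + (Nat.fib (d + 1) : ℤ) * ht -
        (Nat.fib (d + 2) : ℤ) ^ j * h3
    · refine ⟨r + t * Nat.fib (d + 2), ?_⟩
      rw [h2]
      linear_combination (Nat.fib (d + 1) : ℤ) * hr + (Nat.fib (d + 2) : ℤ) * ht

lemma emultiplicity_fib_mul_of_not_sq_dvd {q d j : ℕ} (hq : q.Prime) (hqd : q ∣ Nat.fib d)
    (h4 : q = 2 → 4 ∣ Nat.fib d) (hj : ¬ q ^ 2 ∣ j) :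
    emultiplicity q (Nat.fib (d * j)) = emultiplicity q (Nat.fib d) + emultiplicity q j := by
  rcases d with - | d
  · simp
  have hx0 : Nat.fib (d + 1) ≠ 0 := by simp
  have hqb : ¬ q ∣ Nat.fib (d + 2) := fun h =>
    hq.one_lt.ne' (Nat.eq_one_of_dvd_coprimes (Nat.fib_coprime_fib_succ (d + 1)) hqd h)
  have hsub : (Nat.fib (d + 2) : ℤ) - Nat.fib d = Nat.fib (d + 1) := by
    rw [Nat.fib_add_two]; push_cast; ring
  have hpow : emultiplicity (q : ℤ) ((Nat.fib (d + 2) : ℤ) ^ j - (Nat.fib d : ℤ) ^ j) =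
      emultiplicity q (Nat.fib (d + 1)) + emultiplicity q j := by
    have hqb' : ¬ (q : ℤ) ∣ (Nat.fib (d + 2) : ℤ) := by rwa [Int.natCast_dvd_natCast]
    rcases hq.eq_two_or_odd' with rfl | hodd
    · have := Int.two_pow_sub_pow' (x := Nat.fib (d + 2)) (y := Nat.fib d) j
        (by rw [hsub]; exact_mod_cast h4 rfl) (by exact_mod_cast hqb')
      rw [hsub] at this
      rw [← Int.natCast_emultiplicity, ← Int.natCast_emultiplicity 2 j]
      exact_mod_cast this
    · have : Fact q.Prime := ⟨hq⟩
      have := Int.emultiplicity_pow_sub_pow (p := q) hq hodd (x := Nat.fib (d + 2)) (y := Nat.fib d)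
        (by rw [hsub]; exact_mod_cast hqd) hqb' j
      rwa [hsub, Int.natCast_emultiplicity] at this
  have hfin : FiniteMultiplicity q (Nat.fib (d + 1)) :=
    Nat.finiteMultiplicity_iff.2 ⟨hq.ne_one, Nat.pos_of_ne_zero hx0⟩
  obtain ⟨v, hv⟩ : ∃ v : ℕ, emultiplicity q (Nat.fib (d + 1)) = v :=
    ⟨_, hfin.emultiplicity_eq_multiplicity⟩
  have hv1 : 1 ≤ v := by
    have := le_emultiplicity_of_pow_dvd (k := 1) (by simpa using hqd)
    rw [hv] at this
    exact_mod_cast this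
  have hlt : emultiplicity q j < (2 : ℕ) := emultiplicity_lt_iff_not_dvd.2 hj
  obtain ⟨w, hw⟩ : ∃ w : ℕ, emultiplicity q j = w := by
    lift emultiplicity q j to ℕ using hlt.ne_top with w
    exact ⟨w, rfl⟩
  rw [hw] at hlt
  have hw2 : w < 2 := by exact_mod_cast hlt
  have hrem : (3 * v : ℕ) ≤ emultiplicity (q : ℤ) ((Nat.fib ((d + 1) * j) : ℤ) -
      ((Nat.fib (d + 2) : ℤ) ^ j - (Nat.fib d : ℤ) ^ j)) := by
    refine le_emultiplicity_of_pow_dvd (dvd_trans ?_ (fib_succ_pow_three_dvd d j).1)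
    rw [mul_comm, pow_mul]
    refine pow_dvd_pow_of_dvd ?_ 3
    exact_mod_cast pow_dvd_of_le_emultiplicity hv.ge
  have hmain := emultiplicity_add_of_gt (p := (q : ℤ))
    (b := ((Nat.fib (d + 2) : ℤ) ^ j - (Nat.fib d : ℤ) ^ j))
    (a := (Nat.fib ((d + 1) * j) : ℤ) -
      ((Nat.fib (d + 2) : ℤ) ^ j - (Nat.fib d : ℤ) ^ j)) (lt_of_lt_of_le (by
        rw [hpow, hv, hw]
        have : v + w < 3 * v := by omega
        exact_mod_cast this) hrem)
  rwa [sub_add_cancel, hpow, Int.natCast_emultiplicity] at hmain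

lemma emultiplicity_fib_mul {q d : ℕ} (hq : q.Prime) (hqd : q ∣ Nat.fib d)
    (h4 : q = 2 → 4 ∣ Nat.fib d) (j : ℕ) :
    emultiplicity q (Nat.fib (d * j)) = emultiplicity q (Nat.fib d) + emultiplicity q j := by
  induction j using Nat.strong_induction_on with
  | _ j ih =>
    by_cases hj : q ^ 2 ∣ j
    · rcases Nat.eq_zero_or_pos j with rfl | hj0
      · simp
      obtain ⟨r, rfl⟩ : q ∣ j := (dvd_pow_self q two_ne_zero).trans hj
      have hdr : Nat.fib d ∣ Nat.fib (d * r) := Nat.fib_dvd _ _ (dvd_mul_right _ _)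
      have hr : 0 < r := Nat.pos_of_mul_pos_left hj0
      have hqq : ¬ q ^ 2 ∣ q := fun h => by
        have := Nat.le_of_dvd hq.pos h
        nlinarith [hq.one_lt]
      rw [mul_comm q r, ← mul_assoc, emultiplicity_fib_mul_of_not_sq_dvd hq (hqd.trans hdr)
        (fun h => (h4 h).trans hdr) hqq, ih r (by nlinarith [hq.one_lt]),
        emultiplicity_mul hq.prime, add_assoc]
    · exact emultiplicity_fib_mul_of_not_sq_dvd hq hqd h4 hj

lemma factorization_fib_mul {q d j : ℕ} (hq : q.Prime) (hd : d ≠ 0) (hj : j ≠ 0)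
    (hqd : q ∣ Nat.fib d) (h4 : q = 2 → 4 ∣ Nat.fib d) :
    (Nat.fib (d * j)).factorization q = (Nat.fib d).factorization q + j.factorization q := by
  have : Fact q.Prime := ⟨hq⟩
  have h := emultiplicity_fib_mul hq hqd h4 j
  rw [← padicValNat_eq_emultiplicity (by simp [hd, hj]),
    ← padicValNat_eq_emultiplicity (by simp [hd]),
    ← padicValNat_eq_emultiplicity hj] at h
  simp only [Nat.factorization_def _ hq]
  exact_mod_cast h

/-- At a prime not dividing any of the pairwise greatest common divisors, the product of three
Fibonacci numbers has the same valuation as their least common multiple. -/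
lemma factorization_fib_mul_fib_mul_fib_le {q a b c k : ℕ} (hk : k ≠ 0)
    (ha : a ∣ k) (hb : b ∣ k) (hc : c ∣ k) (hab : ¬ q ∣ Nat.fib (Nat.gcd a b))
    (hac : ¬ q ∣ Nat.fib (Nat.gcd a c)) (hbc : ¬ q ∣ Nat.fib (Nat.gcd b c)) :
    (Nat.fib a).factorization q + (Nat.fib b).factorization q + (Nat.fib c).factorization q ≤
      (Nat.fib k).factorization q := by
  have hle : ∀ x, x ∣ k → (Nat.fib x).factorization q ≤ (Nat.fib k).factorization q :=
    fun x hx => (Nat.factorization_le_iff_dvd (by simpa using ne_zero_of_dvd_ne_zero hk hx)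
      (by simpa using hk)).2 (Nat.fib_dvd _ _ hx) q
  have hmin : ∀ x y, ¬ q ∣ Nat.fib (Nat.gcd x y) →
      (Nat.fib x).factorization q = 0 ∨ (Nat.fib y).factorization q = 0 := by
    intro x y h
    rw [Nat.fib_gcd, Nat.dvd_gcd_iff, not_and_or] at h
    exact h.imp Nat.factorization_eq_zero_of_not_dvd Nat.factorization_eq_zero_of_not_dvd
  have := hle a ha
  have := hle b hb
  have := hle c hc
  have := hmin a b hab
  have := hmin a c hac
  have := hmin b c hbc
  omega

lemma eq_three_of_two_dvd_fib {p : ℕ} (hp : p.Prime) (h : 2 ∣ Nat.fib p) : p = 3 := by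
  have h3 : Nat.fib 3 ∣ Nat.fib p := h
  rw [fib_dvd_fib_iff (by norm_num)] at h3
  exact ((Nat.prime_dvd_prime_iff_eq Nat.prime_three hp).1 h3).symm

lemma factorization_two_fib_six_mul {j : ℕ} (hj : j ≠ 0) :
    (Nat.fib (6 * j)).factorization 2 = 3 + j.factorization 2 := by
  rw [factorization_fib_mul Nat.prime_two (by norm_num) hj (by decide) (by decide)]
  rw [show Nat.fib 6 = 2 ^ 3 by decide, Nat.prime_two.factorization_pow]
  simp

lemma factorization_two_fib_three_mul_of_odd {j : ℕ} (hj : Odd j) :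
    (Nat.fib (3 * j)).factorization 2 = 1 := by
  have h0 : Nat.fib (3 * j) ≠ 0 := by simpa using hj.pos.ne'
  have h2 : 2 ∣ Nat.fib (3 * j) := Nat.fib_dvd 3 _ (dvd_mul_right _ _)
  have h4 : ¬ 2 ^ 2 ∣ Nat.fib (3 * j) := by
    intro h
    have h8 : 2 ^ 2 ∣ Nat.gcd (Nat.fib 6) (Nat.fib (3 * j)) := Nat.dvd_gcd (by decide) h
    rw [← Nat.fib_gcd, show 6 = 3 * 2 by rfl, Nat.gcd_mul_left,
      (Nat.coprime_two_left.2 hj).gcd_eq_one] at h8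
    revert h8; decide
  rw [Nat.prime_two.dvd_iff_one_le_factorization h0] at h2
  rw [Nat.prime_two.pow_dvd_iff_le_factorization h0] at h4
  omega

lemma z_eq_mul_of_factorization {a b c K D : ℕ} (hK : 0 < K) (hD : 0 < D)
    (ha : a ≠ 2) (hb : b ≠ 2) (hc : c ≠ 2) (haK : a ∣ K) (hbK : b ∣ K) (hcK : c ∣ K)
    (hlcm : ∀ k, a ∣ k → b ∣ k → c ∣ k → K ∣ k)
    (hfac : ∀ t q, 0 < t → q.Prime →
      ((Nat.fib a).factorization q + (Nat.fib b).factorization q + (Nat.fib c).factorization q ≤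
        (Nat.fib (K * t)).factorization q ↔ D.factorization q ≤ t.factorization q)) :
    z (Nat.fib a * Nat.fib b * Nat.fib c) = K * D := by
  have hfib : ∀ x, x ∣ K → Nat.fib x ≠ 0 := fun x hx => by
    simpa using ne_zero_of_dvd_ne_zero hK.ne' hx
  have hiff : ∀ t, 0 < t →
      (Nat.fib a * Nat.fib b * Nat.fib c ∣ Nat.fib (K * t) ↔ D ∣ t) := by
    intro t ht
    have hKt : Nat.fib (K * t) ≠ 0 := by simp [hK.ne', ht.ne']
    rw [← Nat.factorization_prime_le_iff_dvd (mul_ne_zero (mul_ne_zero (hfib a haK) (hfib b hbK))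
      (hfib c hcK)) hKt, ← Nat.factorization_prime_le_iff_dvd hD.ne' ht.ne']
    refine forall₂_congr fun q hq => ?_
    rw [Nat.factorization_mul (mul_ne_zero (hfib a haK) (hfib b hbK)) (hfib c hcK),
      Nat.factorization_mul (hfib a haK) (hfib b hbK)]
    exact hfac t q ht hq
  refine z_eq_of_dvd_fib_iff (Nat.mul_pos hK hD) fun k hk => ⟨fun h => ?_, ?_⟩
  · obtain ⟨t, rfl⟩ : K ∣ k := hlcm k
      ((fib_dvd_fib_iff ha).1 ((Dvd.intro _ (mul_assoc _ _ _).symm).trans h))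
      ((fib_dvd_fib_iff hb).1 (((Dvd.intro_left _ rfl).trans (Dvd.intro _ rfl)).trans h))
      ((fib_dvd_fib_iff hc).1 ((Dvd.intro_left _ rfl).trans h))
    exact mul_dvd_mul_left K ((hiff t (Nat.pos_of_mul_pos_left hk)).1 h)
  · rintro ⟨s, rfl⟩
    have hs : 0 < s := Nat.pos_of_mul_pos_left hk
    rw [mul_assoc K]
    exact (hiff _ (Nat.mul_pos hD hs)).2 (dvd_mul_right D s)

lemma coprime_mul_dvd_iff {a b k : ℕ} (h : Nat.Coprime a b) : a * b ∣ k ↔ a ∣ k ∧ b ∣ k :=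
  ⟨fun hk => ⟨dvd_of_mul_right_dvd hk, dvd_of_mul_left_dvd hk⟩,
    fun hk => h.mul_dvd_of_dvd_of_dvd hk.1 hk.2⟩

lemma z_fib_triple_of_coprime {a b c : ℕ} (ha : 0 < a) (hb : 0 < b) (hc : 0 < c)
    (hb2 : b ≠ 2) (hc2 : c ≠ 2) (hab : Nat.gcd a b = 1) (hbc : Nat.gcd b c = 1)
    (hac : Nat.gcd a c ∣ 2) (h2 : a = 2 → 2 ∣ c) :
    z (Nat.fib a * Nat.fib b * Nat.fib c) = b * Nat.lcm a c := by
  refine z_eq_of_dvd_fib_iff (Nat.mul_pos hb (Nat.lcm_pos ha hc)) fun k _ => ?_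
  have hcop : Nat.Coprime b (Nat.lcm a c) :=
    Nat.Coprime.of_dvd_right (Nat.lcm_dvd_mul a c) (Nat.Coprime.mul_right (Nat.coprime_comm.1 hab) hbc)
  have hFab := fib_coprime_of_gcd (a := a) (b := b) (by simp [hab])
  have hFbc := fib_coprime_of_gcd (a := b) (b := c) (by simp [hbc])
  have hFac := fib_coprime_of_gcd hac
  rw [coprime_mul_dvd_iff hcop, Nat.lcm_dvd_iff, coprime_mul_dvd_iff (Nat.Coprime.mul_left hFac hFbc),
    coprime_mul_dvd_iff hFab, fib_dvd_fib_iff hb2, fib_dvd_fib_iff hc2]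
  rcases eq_or_ne a 2 with rfl | ha2
  · have h2c : c ∣ k → 2 ∣ k := (h2 rfl).trans
    rw [Nat.fib_two]
    simp only [one_dvd, true_and]
    tauto
  · rw [fib_dvd_fib_iff ha2]; tauto

lemma z_fib_triple_mul_odd {p m : ℕ} (hp : p.Prime) (hp3 : 3 ≤ p) (hm : Odd m) :
    z (Nat.fib (p * m) * Nat.fib (p * (m + 1)) * Nat.fib (p * (m + 2))) =
      (p * (m * (m + 1) * (m + 2))) * Nat.fib p ^ 2 := by
  have hm0 : 0 < m := hm.pos
  have h01 : Nat.Coprime m (m + 1) := by simp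
  have h12 : Nat.Coprime (m + 1) (m + 2) := by
    rw [show m + 2 = m + 1 + 1 by rfl, Nat.coprime_self_add_right]
    simp
  have h02 : Nat.Coprime m (m + 2) := by
    rw [Nat.coprime_self_add_right]
    exact Nat.coprime_two_right.2 hm
  have hfp : 0 < Nat.fib p := Nat.fib_pos.2 hp.pos
  refine z_eq_mul_of_factorization (by positivity) (by positivity) (by nlinarith) (by nlinarith)
    (by nlinarith) (mul_dvd_mul_left p ⟨(m + 1) * (m + 2), by ring⟩)
    (mul_dvd_mul_left p ⟨m * (m + 2), by ring⟩) (mul_dvd_mul_left p ⟨m * (m + 1), by ring⟩) ?_ ?_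
  · rintro k ⟨s, rfl⟩ h1 h2
    rw [mul_assoc p] at h1 h2 ⊢
    have h1' := Nat.dvd_of_mul_dvd_mul_left hp.pos h1
    have h2' := Nat.dvd_of_mul_dvd_mul_left hp.pos h2
    exact mul_dvd_mul_left p (Nat.Coprime.mul_dvd_of_dvd_of_dvd (Nat.Coprime.mul_left h02 h12)
      (Nat.Coprime.mul_dvd_of_dvd_of_dvd h01 (dvd_mul_right m s) h1') h2')
  · intro t q ht hq
    rw [Nat.factorization_pow, mul_assoc p]
    simp only [Finsupp.smul_apply, smul_eq_mul]
    by_cases hqf : q ∣ Nat.fib p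
    · have hprod : (m * (m + 1) * (m + 2) * t).factorization q = m.factorization q +
          (m + 1).factorization q + (m + 2).factorization q + t.factorization q := by
        rw [Nat.factorization_mul (by positivity) ht.ne', Nat.factorization_mul (by positivity)
          (by positivity), Nat.factorization_mul (by positivity) (by positivity)]
        rfl
      rcases eq_or_ne q 2 with rfl | hq2
      · obtain rfl := eq_three_of_two_dvd_fib hp hqf
        obtain ⟨h, hh⟩ : 2 ∣ m + 1 := hm.add_one.two_dvd
        have hh0 : h ≠ 0 := by omega
        have hm1 : (m + 1).factorization 2 = 1 + h.factorization 2 := by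
          rw [hh, Nat.factorization_mul two_ne_zero hh0, Finsupp.add_apply,
            Nat.prime_two.factorization_self]
        have hm' : m.factorization 2 = 0 :=
          Nat.factorization_eq_zero_of_not_dvd hm.not_two_dvd_nat
        have hm2' : (m + 2).factorization 2 = 0 :=
          Nat.factorization_eq_zero_of_not_dvd (hm.add_even even_two).not_two_dvd_nat
        have hk := factorization_two_fib_six_mul (j := m * h * (m + 2) * t) (by positivity)
        have hj : (m * h * (m + 2) * t).factorization 2 = h.factorization 2 + t.factorization 2 := by
          rw [Nat.factorization_mul (by positivity) ht.ne', Nat.factorization_mul (by positivity)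
            (by positivity), Nat.factorization_mul (by positivity) (by positivity)]
          simp [hm', hm2']
        have hb := factorization_two_fib_six_mul hh0
        have ha := factorization_two_fib_three_mul_of_odd hm
        have hc := factorization_two_fib_three_mul_of_odd (hm.add_even even_two)
        have hf : (Nat.fib 3).factorization 2 = 1 :=
          factorization_two_fib_three_mul_of_odd (j := 1) odd_one
        rw [show 3 * (m + 1) = 6 * h by omega, ha, hb, hc, hf,
          show 3 * (m * (m + 1) * (m + 2) * t) = 6 * (m * h * (m + 2) * t) by rw [hh]; ring,
          hk, hj]
        omega
      · have hv : ∀ j, 0 < j → (Nat.fib (p * j)).factorization q =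
            (Nat.fib p).factorization q + j.factorization q := fun j hj =>
          factorization_fib_mul hq hp.ne_zero hj.ne' hqf fun h => absurd h hq2
        rw [hv _ hm0, hv _ (by positivity), hv _ (by positivity), hv _ (by positivity), hprod]
        omega
    · rw [Nat.factorization_eq_zero_of_not_dvd hqf, mul_zero]
      refine iff_of_true (factorization_fib_mul_fib_mul_fib_le (by positivity)
        (mul_dvd_mul_left p ⟨(m + 1) * (m + 2) * t, by ring⟩)
        (mul_dvd_mul_left p ⟨m * (m + 2) * t, by ring⟩)
        (mul_dvd_mul_left p ⟨m * (m + 1) * t, by ring⟩) ?_ ?_ ?_) (Nat.zero_le _) <;>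
      rw [Nat.gcd_mul_left]
      · rwa [h01.gcd_eq_one, mul_one]
      · rwa [h02.gcd_eq_one, mul_one]
      · rwa [h12.gcd_eq_one, mul_one]

lemma lucas_pos (n : ℕ) : 0 < lucas n := by
  cases n with
  | zero => simp [lucas]
  | succ n => rw [lucas_succ]; simp

lemma not_dvd_lucas_of_dvd_fib {q p : ℕ} (hq : q.Prime) (hq2 : q ≠ 2) (hqp : q ∣ Nat.fib p) :
    ¬ q ∣ lucas p := by
  intro hL
  cases p with
  | zero =>
    exact hq2 ((Nat.prime_dvd_prime_iff_eq hq Nat.prime_two).1 (by simpa [lucas] using hL))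
  | succ n =>
    have h : lucas (n + 1) = Nat.fib (n + 1) + 2 * Nat.fib n := by
      rw [lucas_succ, Nat.fib_add_two]; ring
    rw [h, Nat.dvd_add_right hqp, hq.dvd_mul, Nat.prime_dvd_prime_iff_eq hq Nat.prime_two] at hL
    exact hq.one_lt.ne' (Nat.eq_one_of_dvd_coprimes (Nat.fib_coprime_fib_succ n)
      (hL.resolve_left hq2) hqp)

lemma z_fib_triple_mul_even {p h : ℕ} (hp : p.Prime) (hp3 : 3 ≤ p) (hh : 0 < h) :
    z (Nat.fib (2 * p * h) * Nat.fib (p * (2 * h + 1)) * Nat.fib (2 * p * (h + 1))) =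
      2 * p * (h * (h + 1) * (2 * h + 1)) *
        (Nat.fib p ^ 2 * lucas p / Nat.gcd (lucas p) (2 * h + 1)) := by
  have h01 : Nat.Coprime h (h + 1) := by simp
  have h0b : Nat.Coprime h (2 * h + 1) := by simp
  have h1b : Nat.Coprime (h + 1) (2 * h + 1) := by
    rw [show 2 * h + 1 = h + (h + 1) by ring]; simp
  have h2b : Nat.Coprime 2 (2 * h + 1) := by simp
  have hfp : 0 < Nat.fib p := Nat.fib_pos.2 hp.pos
  have hL : 0 < lucas p := lucas_pos p
  have hp2 : 0 < 2 * p := by omega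
  have hF2p : (Nat.fib (2 * p)).factorization =
      (Nat.fib p).factorization + (lucas p).factorization := by
    rw [fib_two_mul_eq_mul_lucas, Nat.factorization_mul hfp.ne' hL.ne']
  set g := Nat.gcd (lucas p) (2 * h + 1) with hg
  have hg0 : 0 < g := Nat.gcd_pos_of_pos_left _ hL
  obtain ⟨D, hD⟩ : g ∣ Nat.fib p ^ 2 * lucas p :=
    (Nat.gcd_dvd_left _ _).trans (dvd_mul_left _ _)
  have hD0 : 0 < D := by
    refine Nat.pos_of_ne_zero ?_
    rintro rfl
    have : 0 < Nat.fib p ^ 2 * lucas p := by positivity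
    omega
  have hfacD : ∀ q, min ((lucas p).factorization q) ((2 * h + 1).factorization q) +
      D.factorization q = 2 * (Nat.fib p).factorization q + (lucas p).factorization q := by
    intro q
    have := congrArg (fun x => x.factorization q) hD
    rw [Nat.factorization_mul (by positivity) hL.ne', Nat.factorization_mul hg0.ne' hD0.ne',
      Nat.factorization_pow, hg, Nat.factorization_gcd hL.ne' (by positivity)] at this
    exact this.symm
  rw [hD, Nat.mul_div_cancel_left D hg0]
  have hak : ∀ t, 2 * p * h ∣ 2 * p * (h * (h + 1) * (2 * h + 1)) * t := fun t =>
    ⟨(h + 1) * (2 * h + 1) * t, by ring⟩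
  have hbk : ∀ t, p * (2 * h + 1) ∣ 2 * p * (h * (h + 1) * (2 * h + 1)) * t := fun t =>
    ⟨2 * h * (h + 1) * t, by ring⟩
  have hck : ∀ t, 2 * p * (h + 1) ∣ 2 * p * (h * (h + 1) * (2 * h + 1)) * t := fun t =>
    ⟨h * (2 * h + 1) * t, by ring⟩
  have hgcdb : ∀ j, Nat.gcd (p * (2 * h + 1)) (2 * p * j) = p * Nat.gcd (2 * h + 1) j := by
    intro j
    rw [show 2 * p * j = p * (2 * j) by ring, Nat.gcd_mul_left,
      h2b.gcd_mul_left_cancel_right]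
  refine z_eq_mul_of_factorization (by positivity) hD0 (by nlinarith) (by nlinarith)
    (by nlinarith) (by simpa using hak 1) (by simpa using hbk 1) (by simpa using hck 1) ?_ ?_
  · rintro k ⟨s, rfl⟩ h1 h2
    rw [mul_assoc (2 * p)] at h1 h2 ⊢
    have h2' := Nat.dvd_of_mul_dvd_mul_left hp2 h2
    have h1' : 2 * h + 1 ∣ 2 * (h * s) :=
      Nat.dvd_of_mul_dvd_mul_left hp.pos (by rwa [mul_left_comm, ← mul_assoc 2 p])
    exact mul_dvd_mul_left _ (Nat.Coprime.mul_dvd_of_dvd_of_dvd (Nat.Coprime.mul_left h0b h1b)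
      (Nat.Coprime.mul_dvd_of_dvd_of_dvd h01 (dvd_mul_right h s) h2')
      (h2b.symm.dvd_of_dvd_mul_left h1'))
  · intro t q ht hq
    have hDq := hfacD q
    by_cases hqf : q ∣ Nat.fib (2 * p)
    · have hprod : (h * (h + 1) * (2 * h + 1) * t).factorization q = h.factorization q +
          (h + 1).factorization q + (2 * h + 1).factorization q + t.factorization q := by
        rw [Nat.factorization_mul (by positivity) ht.ne', Nat.factorization_mul (by positivity)
          (by positivity), Nat.factorization_mul (by positivity) (by positivity)]
        rfl
      rcases eq_or_ne q 2 with rfl | hq2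
      · obtain rfl : p = 3 := by
          have h3 : Nat.fib 3 ∣ Nat.fib (2 * p) := hqf
          rw [fib_dvd_fib_iff (by norm_num), Nat.prime_three.dvd_mul] at h3
          exact ((Nat.prime_dvd_prime_iff_eq Nat.prime_three hp).1
            (h3.resolve_left (by norm_num))).symm
        have hf : (Nat.fib 3).factorization 2 = 1 :=
          factorization_two_fib_three_mul_of_odd (j := 1) odd_one
        have hf6 : (Nat.fib (2 * 3)).factorization 2 = 3 := by
          simpa using factorization_two_fib_six_mul one_ne_zero
        rw [hF2p, Finsupp.add_apply] at hf6
        have hodd : (2 * h + 1).factorization 2 = 0 :=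
          Nat.factorization_eq_zero_of_not_dvd (by omega)
        rw [show 2 * 3 = 6 by rfl, mul_assoc 6, factorization_two_fib_six_mul hh.ne',
          factorization_two_fib_six_mul (by positivity),
          factorization_two_fib_six_mul (by positivity), hprod,
          factorization_two_fib_three_mul_of_odd ⟨h, rfl⟩]
        omega
      · have hv : ∀ j, 0 < j → (Nat.fib (2 * p * j)).factorization q =
            (Nat.fib p).factorization q + (lucas p).factorization q + j.factorization q := by
          intro j hj
          rw [factorization_fib_mul hq hp2.ne' hj.ne' hqf fun h => absurd h hq2, hF2p]
          rfl
        rw [mul_assoc (2 * p), hv _ hh, hv _ (by positivity), hv _ (by positivity), hprod]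
        by_cases hqp : q ∣ Nat.fib p
        · rw [factorization_fib_mul hq hp.ne_zero (by positivity) hqp fun h => absurd h hq2]
          have : (lucas p).factorization q = 0 :=
            Nat.factorization_eq_zero_of_not_dvd (not_dvd_lucas_of_dvd_fib hq hq2 hqp)
          omega
        · have hb : (Nat.fib (p * (2 * h + 1))).factorization q = 0 := by
            refine Nat.factorization_eq_zero_of_not_dvd fun hqb => hqp ?_
            have := Nat.dvd_gcd hqb hqf
            rwa [← Nat.fib_gcd, ← mul_one (2 * p), hgcdb, Nat.gcd_one_right, mul_one] at this
          have : (Nat.fib p).factorization q = 0 := Nat.factorization_eq_zero_of_not_dvd hqp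
          omega
    · have hqp : ¬ q ∣ Nat.fib p := fun h => hqf (h.trans (Nat.fib_dvd _ _ (dvd_mul_left _ _)))
      have h0 := Nat.factorization_eq_zero_of_not_dvd hqf
      rw [hF2p, Finsupp.add_apply] at h0
      refine iff_of_true (factorization_fib_mul_fib_mul_fib_le (by positivity)
        (hak t) (hbk t) (hck t) ?_ ?_ ?_) (by omega)
      · rwa [Nat.gcd_comm, hgcdb, h0b.symm.gcd_eq_one, mul_one]
      · rwa [Nat.gcd_mul_left, h01.gcd_eq_one, mul_one]
      · rwa [hgcdb, h1b.symm.gcd_eq_one, mul_one]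

theorem z_fib_triple (n p : ℕ) (hn : 0 < n) (hp : p.Prime) (hp3 : 3 ≤ p) :
    (¬ p ∣ n → Odd n →
      z (Nat.fib n * Nat.fib (n + p) * Nat.fib (n + 2 * p)) =
        n * (n + p) * (n + 2 * p)) ∧
    (¬ p ∣ n → Even n →
      z (Nat.fib n * Nat.fib (n + p) * Nat.fib (n + 2 * p)) =
        n * (n + p) * (n + 2 * p) / 2) ∧
    (p ∣ n → Odd n →
      z (Nat.fib n * Nat.fib (n + p) * Nat.fib (n + 2 * p)) =
        (n * (n + p) * (n + 2 * p) / p ^ 2) * Nat.fib p ^ 2) ∧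
    (p ∣ n → Even n →
      z (Nat.fib n * Nat.fib (n + p) * Nat.fib (n + 2 * p)) =
        (n * (n + p) * (n + 2 * p) / (2 * p ^ 2)) *
          (Nat.fib p ^ 2 * lucas p / Nat.gcd (lucas p) ((n + p) / p))) := by
  have hodd : Odd p := hp.odd_of_ne_two (by omega)
  refine ⟨fun hpn hno => ?_, fun hpn hne => ?_, ?_, ?_⟩
  · have hcop : Nat.Coprime n p := ((hp.coprime_iff_not_dvd).2 hpn).symm
    have hac : Nat.Coprime n (n + 2 * p) := by
      rw [Nat.coprime_self_add_right]
      exact Nat.Coprime.mul_right (Nat.coprime_two_right.2 hno) hcop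
    rw [z_fib_triple_of_coprime hn (by omega) (by omega) (by omega) (by omega)
      (by simpa using hcop) (by
        rw [show n + 2 * p = n + p + p by omega, Nat.gcd_self_add_right,
          Nat.gcd_add_self_left, hcop.gcd_eq_one])
      (by simp [hac.gcd_eq_one]) (by rintro rfl; exact absurd hno (by decide)), hac.lcm_eq_mul]
    ring
  · have hcop : Nat.Coprime n p := ((hp.coprime_iff_not_dvd).2 hpn).symm
    have hac : Nat.gcd n (n + 2 * p) = 2 := by
      rw [Nat.gcd_self_add_right, hcop.symm.gcd_mul_right_cancel_right]
      exact Nat.gcd_eq_right hne.two_dvd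
    have hlcm := Nat.gcd_mul_lcm n (n + 2 * p)
    rw [hac] at hlcm
    rw [z_fib_triple_of_coprime hn (by omega) (by omega) (by omega) (by omega)
      (by simpa using hcop) (by
        rw [show n + 2 * p = n + p + p by omega, Nat.gcd_self_add_right,
          Nat.gcd_add_self_left, hcop.gcd_eq_one])
      (by simp [hac]) (by rintro rfl; omega)]
    rw [show n * (n + p) * (n + 2 * p) = 2 * ((n + p) * Nat.lcm n (n + 2 * p)) by
      rw [mul_right_comm, ← hlcm]; ring, Nat.mul_div_cancel_left _ two_pos]
  · rintro ⟨m, rfl⟩ hno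
    rw [show p * m * (p * m + p) * (p * m + 2 * p) =
        p ^ 2 * (p * (m * (m + 1) * (m + 2))) by ring,
      Nat.mul_div_cancel_left _ (pow_pos hp.pos 2),
      ← z_fib_triple_mul_odd hp hp3 (Nat.odd_mul.1 hno).2]
    congr 3
    ring
  · rintro ⟨m, rfl⟩ hne
    obtain ⟨h, rfl⟩ : 2 ∣ m := ((Nat.even_mul.1 hne).resolve_left
      (Nat.not_even_iff_odd.2 hodd)).two_dvd
    have hh : 0 < h := by
      rcases Nat.eq_zero_or_pos h with rfl | hh
      · simp at hn
      · exact hh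
    rw [show p * (2 * h) * (p * (2 * h) + p) * (p * (2 * h) + 2 * p) =
        2 * p ^ 2 * (2 * p * (h * (h + 1) * (2 * h + 1))) by ring,
      Nat.mul_div_cancel_left _ (by have := hp.pos; positivity),
      show (p * (2 * h) + p) = p * (2 * h + 1) by ring, Nat.mul_div_cancel_left _ hp.pos,
      ← z_fib_triple_mul_even hp hp3 hh]
    ring_nf
end
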